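/- arXiv:2506.11228 — 5 statements merged into one kernel-verified Lean document; each statement's English description precedes it below -/
import Mathlib

section
/- Let n ≥ 1 and let A be an n × n matrix with natural number entries that is irreducible, meaning that for every pair of indices (i, j) there exists m ≥ 1 such that the (i, j) entry of A^m is positive. Suppose moreover that A is not a permutation matrix, i.e. there is no permutation σ of the indices such that A i j = 1 when j = σ(i) and A i j = 0 otherwise. Define a directed relation R on indices by: R i j holds if and only if A i j = 1 and A k j = 0 for all k ≠ i. Then R admits no directed cycle: there is no sequence of indices i₀, i₁, …, i_m with m ≥ 1, i_m = i₀, and R i_t i_{t+1} for all 0 ≤ t < m. -/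
/-!
If `R i j`, then `i` is the only row with a nonzero entry in column `j`. Hence following nonzero
entries backwards from a directed cycle of `R` never leaves the cycle, and irreducibility forces the
cycle to contain every index. So there are finitely many indices, and each standard basis vector
occurs among the columns of `A`; distinct vectors occupy distinct columns, so `A` is a permutation
matrix.
-/

open Relation

/-- Adjacency in the auxiliary graph `G(f)` of the paper, for a graph map `f` with transition matrix
`A`: the `j`-th column of `A` is the `i`-th standard basis vector. -/
def AuxAdj {ι α : Type*} [Zero α] [One α] (A : Matrix ι ι α) (i j : ι) : Prop :=
  A i j = 1 ∧ ∀ k, k ≠ i → A k j = 0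

theorem reflTransGen_of_pow_apply_ne_zero {ι α : Type*} [Fintype ι] [DecidableEq ι] [Semiring α]
    {A : Matrix ι ι α} {m : ℕ} {i j : ι} (h : (A ^ m) i j ≠ 0) :
    ReflTransGen (fun a b ↦ A a b ≠ 0) i j := by
  induction m generalizing i with
  | zero =>
    have hij : i = j := by
      by_contra hij
      exact h (by rw [pow_zero, Matrix.one_apply_ne hij])
    rw [hij]
  | succ m ih =>
    rw [pow_succ', Matrix.mul_apply] at h
    obtain ⟨l, -, hl⟩ := Finset.exists_ne_zero_of_sum_ne_zero h
    exact .head (left_ne_zero_of_mul hl) (ih (right_ne_zero_of_mul hl))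

theorem exists_lt_apply_succ_eq_of_apply_eq_apply_zero {ι : Type*} {seq : ℕ → ι} {m t : ℕ}
    (hclosed : seq m = seq 0) (ht : t < m) : ∃ s < m, seq (s + 1) = seq t := by
  cases t with
  | zero => exact ⟨m - 1, by lia, by rw [Nat.sub_add_cancel ht, hclosed]⟩
  | succ t => exact ⟨t, by lia, rfl⟩

section AuxAdj

variable {ι α : Type*} [Zero α] [One α] {A : Matrix ι ι α}

theorem AuxAdj.eq_of_apply_ne_zero {i j k : ι} (h : AuxAdj A i j) (hk : A k j ≠ 0) : k = i :=
  of_not_not fun hki ↦ hk (h.2 k hki)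

theorem AuxAdj.left_unique [NeZero (1 : α)] {i i' j : ι} (h : AuxAdj A i j)
    (h' : AuxAdj A i' j) : i = i' :=
  h'.eq_of_apply_ne_zero (h.1 ▸ one_ne_zero)

theorem exists_perm_of_forall_exists_auxAdj [Finite ι] [DecidableEq ι] [NeZero (1 : α)]
    (h : ∀ i, ∃ j, AuxAdj A i j) :
    ∃ σ : Equiv.Perm ι, ∀ i j, A i j = if j = σ i then 1 else 0 := by
  choose next hnext using h
  have hinj : Function.Injective next := fun i i' hii' ↦
    (hnext i).left_unique (hii' ▸ hnext i')
  refine ⟨.ofBijective next (Finite.injective_iff_bijective.mp hinj), fun i j ↦ ?_⟩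
  obtain ⟨k, rfl⟩ := Finite.surjective_of_injective hinj j
  rw [Equiv.ofBijective_apply]
  split_ifs with hki
  · rw [← hinj hki, (hnext k).1]
  · exact (hnext k).2 i fun hik ↦ hki (hik ▸ rfl)

theorem exists_lt_apply_eq_of_reflTransGen {m : ℕ} {seq : ℕ → ι} (hm : 1 ≤ m)
    (hclosed : seq m = seq 0) (hadj : ∀ t < m, AuxAdj A (seq t) (seq (t + 1))) {i : ι}
    (hi : ReflTransGen (fun a b ↦ A a b ≠ 0) i (seq 0)) : ∃ t < m, seq t = i := by
  induction hi using ReflTransGen.head_induction_on with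
  | refl => exact ⟨0, hm, rfl⟩
  | head hne _ ih =>
    obtain ⟨t, ht, rfl⟩ := ih
    obtain ⟨s, hs, hst⟩ := exists_lt_apply_succ_eq_of_apply_eq_apply_zero hclosed ht
    exact ⟨s, hs, ((hadj s hs).eq_of_apply_ne_zero (hst ▸ hne)).symm⟩

theorem stmt0_general [DecidableEq ι] [NeZero (1 : α)] (A : Matrix ι ι α)
    (hirr : ∀ i j, ReflTransGen (fun a b ↦ A a b ≠ 0) i j)
    (hperm : ¬ ∃ σ : Equiv.Perm ι, ∀ i j, A i j = if j = σ i then 1 else 0) :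
    ¬ ∃ (m : ℕ) (seq : ℕ → ι), 1 ≤ m ∧ seq m = seq 0 ∧
      ∀ t < m, AuxAdj A (seq t) (seq (t + 1)) := by
  rintro ⟨m, seq, hm, hclosed, hadj⟩
  have hcover : ∀ i, ∃ t < m, seq t = i := fun i ↦
    exists_lt_apply_eq_of_reflTransGen hm hclosed hadj (hirr i (seq 0))
  have : Finite ι := Finite.of_surjective (fun t : Fin m ↦ seq t) fun i ↦
    let ⟨t, ht, hti⟩ := hcover i
    ⟨⟨t, ht⟩, hti⟩
  refine hperm (exists_perm_of_forall_exists_auxAdj fun i ↦ ?_)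
  obtain ⟨t, ht, rfl⟩ := hcover i
  exact ⟨seq (t + 1), hadj t ht⟩

end AuxAdj

/-- The combinatorial content of the paper's Lemma on the auxiliary graph `G(f)`:
for an irreducible non-permutation matrix `A` with natural number entries,
the relation `R i j ↔ (A i j = 1 ∧ ∀ k ≠ i, A k j = 0)` admits no directed cycle. -/
theorem stmt0 (n : ℕ) (hn : 1 ≤ n) (A : Matrix (Fin n) (Fin n) ℕ)
    (hirr : ∀ i j : Fin n, ∃ m : ℕ, 1 ≤ m ∧ 0 < (A ^ m) i j)
    (hperm : ¬ ∃ σ : Equiv.Perm (Fin n), ∀ i j : Fin n,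
      A i j = if j = σ i then 1 else 0) :
    ¬ ∃ (m : ℕ) (seq : ℕ → Fin n), 1 ≤ m ∧ seq m = seq 0 ∧
      ∀ t < m, A (seq t) (seq (t + 1)) = 1 ∧
        ∀ k : Fin n, k ≠ seq t → A k (seq (t + 1)) = 0 :=
  stmt0_general A (fun i j ↦ let ⟨_, _, hpos⟩ := hirr i j
    reflTransGen_of_pow_apply_ne_zero hpos.ne') hperm
end

section
/- Let F₃ be the free group on generators a, b, c, let Φ be the automorphism of F₃ determined by a ↦ c·a, b ↦ a·b, c ↦ b⁻¹·a·b, and let G = F₃ ⋊_Φ ℤ be the semidirect product in which the generator 1 ∈ ℤ acts on F₃ by Φ (so n ∈ ℤ acts by Φⁿ). Then the abelianization of G is free abelian of rank 2; explicitly, it is isomorphic to ℤ × ℤ, with the images of b ∈ F₃ and of the stable generator r = (1, 1 ∈ ℤ) forming a basis. -/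
/-!
For any action `φ` of `H` on `N`, conjugation by `H` becomes trivial in an abelian quotient, so
the abelianization of `N ⋊[φ] H` is the product of the coinvariants of `Nᵃᵇ` with `Hᵃᵇ`. For the
mapping torus of `Φ` on `F₃`, the coinvariants are `F₃ᵃᵇ` modulo `c + a = a`, `a + b = b` and
`a = c`: these relations kill exactly `a` and `c`, leaving the infinite cyclic group on `b`.
-/

section Coinvariants

variable {N H A : Type*} [Group N] [Group H] [CommGroup A] (φ : H →* MulAut N)

/-- The coinvariants `(Nᵃᵇ)_H` of an action `φ` of `H` on `N` by automorphisms: the largest abelian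
quotient of `N` on which `H` acts trivially, encoded as the quotient of `Nᵃᵇ` by the subgroup
generated by the differences of `φ h n` and `n`. -/
abbrev AbelianizationCoinvariants : Type _ :=
  Abelianization N ⧸ Subgroup.closure
    (Set.range fun p : H × N ↦ Abelianization.of (φ p.1 p.2) / Abelianization.of p.2)

namespace AbelianizationCoinvariants

/-- The projection of `N` onto its abelian coinvariants. -/
def mk : N →* AbelianizationCoinvariants φ :=
  (QuotientGroup.mk' _).comp Abelianization.of

theorem mk_aut_apply (h : H) (n : N) : mk φ (φ h n) = mk φ n :=
  QuotientGroup.eq_iff_div_mem.mpr (Subgroup.subset_closure ⟨(h, n), rfl⟩)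

theorem mk_eq_one_of_aut_apply_eq_mul {h : H} {x y : N} (hxy : φ h x = y * x) : mk φ y = 1 :=
  mul_eq_right.mp (by rw [← map_mul, ← hxy, mk_aut_apply])

/-- The universal property of the abelian coinvariants: an `H`-invariant homomorphism to a
commutative group factors through them. -/
def lift (f : N →* A) (hf : ∀ h n, f (φ h n) = f n) : AbelianizationCoinvariants φ →* A :=
  QuotientGroup.lift _ (Abelianization.lift f) <| by
    rw [Subgroup.closure_le]
    rintro _ ⟨⟨h, n⟩, rfl⟩
    simp [hf]

@[simp]
theorem lift_mk (f : N →* A) (hf : ∀ h n, f (φ h n) = f n) (n : N) :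
    lift φ f hf (mk φ n) = f n :=
  rfl

variable {φ} in
theorem hom_ext {M : Type*} [Monoid M] {f g : AbelianizationCoinvariants φ →* M}
    (h : f.comp (mk φ) = g.comp (mk φ)) : f = g :=
  QuotientGroup.monoidHom_ext _ (Abelianization.hom_ext _ _ h)

end AbelianizationCoinvariants

open AbelianizationCoinvariants

theorem abelianization_of_inl_aut (h : H) (n : N) :
    Abelianization.of (SemidirectProduct.inl (φ h n) : N ⋊[φ] H) =
      Abelianization.of (SemidirectProduct.inl n) := by
  rw [SemidirectProduct.inl_aut, map_mul, map_mul, map_inv, map_inv, mul_inv_cancel_comm]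

/-- The isomorphism `(N ⋊[φ] H)ᵃᵇ ≃* (Nᵃᵇ)_H × Hᵃᵇ`. -/
def abelianizationSemidirectProductEquiv :
    Abelianization (N ⋊[φ] H) ≃* AbelianizationCoinvariants φ × Abelianization H :=
  MonoidHom.toMulEquiv
    (Abelianization.lift <| SemidirectProduct.lift
      ((MonoidHom.inl _ _).comp (mk φ)) ((MonoidHom.inr _ _).comp Abelianization.of)
      fun h ↦ by ext n <;> simp [mk_aut_apply])
    ((lift φ (Abelianization.of.comp SemidirectProduct.inl) (abelianization_of_inl_aut φ)).coprod
      (Abelianization.map SemidirectProduct.inr))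
    (by
      apply Abelianization.hom_ext
      apply SemidirectProduct.hom_ext <;> ext <;> simp)
    (by
      rw [MonoidHom.comp_coprod, ← MonoidHom.coprod_inl_inr]
      congr 1
      · apply hom_ext
        ext n <;> simp
      · ext h <;> simp)

@[simp]
theorem abelianizationSemidirectProductEquiv_of_inl (n : N) :
    abelianizationSemidirectProductEquiv φ (Abelianization.of (SemidirectProduct.inl n)) =
      (mk φ n, 1) := by
  simp [abelianizationSemidirectProductEquiv]

@[simp]
theorem abelianizationSemidirectProductEquiv_of_inr (h : H) :
    abelianizationSemidirectProductEquiv φ (Abelianization.of (SemidirectProduct.inr h)) =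
      (1, Abelianization.of h) := by
  simp [abelianizationSemidirectProductEquiv]

end Coinvariants

theorem apply_zpowersHom_mulAut_of_invariant {N X : Type*} [Group N] {Φ : MulAut N} {f : N → X}
    (hf : ∀ n, f (Φ n) = f n) (z : Multiplicative ℤ) (n : N) :
    f (zpowersHom (MulAut N) Φ z n) = f n := by
  have hΦ : DomMulAct.mk Φ ∈ MulAction.stabilizer (MulAut N)ᵈᵐᵃ f := funext hf
  exact congrFun (zpow_mem hΦ z.toAdd) n

section FreeGroup

open FreeGroup AbelianizationCoinvariants

/-- The homomorphism `FreeGroup α →* ℤ` counting the occurrences of the generator `i` with sign. -/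
def exponentSum {α : Type*} [DecidableEq α] (i : α) : FreeGroup α →* Multiplicative ℤ :=
  FreeGroup.lift (Pi.mulSingle i (Multiplicative.ofAdd 1))

@[simp]
theorem exponentSum_of {α : Type*} [DecidableEq α] (i j : α) :
    exponentSum i (of j) = Pi.mulSingle (M := fun _ ↦ Multiplicative ℤ) i (.ofAdd 1) j :=
  FreeGroup.lift_apply_of

variable {Φ : MulAut (FreeGroup (Fin 3))}

theorem exponentSum_one_mulAut_apply (ha : Φ (of 0) = of 2 * of 0) (hb : Φ (of 1) = of 0 * of 1)
    (hc : Φ (of 2) = (of 1)⁻¹ * of 0 * of 1) (w : FreeGroup (Fin 3)) :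
    exponentSum 1 (Φ w) = exponentSum 1 w := by
  have invariant : (exponentSum 1).comp Φ.toMonoidHom = exponentSum 1 := by
    ext i
    fin_cases i <;> simp [ha, hb, hc]
  exact DFunLike.congr_fun invariant w

theorem mk_zpowersHom_of_two_eq_one (ha : Φ (of 0) = of 2 * of 0) :
    mk (zpowersHom _ Φ) (of 2) = 1 :=
  mk_eq_one_of_aut_apply_eq_mul (h := .ofAdd 1) _ (by simpa using ha)

theorem mk_zpowersHom_of_zero_eq_one (hb : Φ (of 1) = of 0 * of 1) :
    mk (zpowersHom _ Φ) (of 0) = 1 :=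
  mk_eq_one_of_aut_apply_eq_mul (h := .ofAdd 1) _ (by simpa using hb)

/-- The isomorphism of the abelian coinvariants of `Φ` with `ℤ` given by the exponent sum of `b`. -/
def coinvariantsEquivInt (ha : Φ (of 0) = of 2 * of 0) (hb : Φ (of 1) = of 0 * of 1)
    (hc : Φ (of 2) = (of 1)⁻¹ * of 0 * of 1) :
    AbelianizationCoinvariants (zpowersHom (MulAut (FreeGroup (Fin 3))) Φ) ≃* Multiplicative ℤ :=
  MonoidHom.toMulEquiv
    (lift _ (exponentSum 1) <|
      apply_zpowersHom_mulAut_of_invariant (exponentSum_one_mulAut_apply ha hb hc))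
    (zpowersHom _ (mk _ (of 1)))
    (by
      apply hom_ext
      ext i
      fin_cases i <;> simp [mk_zpowersHom_of_zero_eq_one hb, mk_zpowersHom_of_two_eq_one ha])
    (by ext; simp)

@[simp]
theorem coinvariantsEquivInt_mk_of_one (ha : Φ (of 0) = of 2 * of 0) (hb : Φ (of 1) = of 0 * of 1)
    (hc : Φ (of 2) = (of 1)⁻¹ * of 0 * of 1) :
    coinvariantsEquivInt ha hb hc (mk _ (of 1)) = .ofAdd 1 := by
  simp [coinvariantsEquivInt]

end FreeGroup

/-- Let `Φ` be the automorphism of `F₃ = FreeGroup (Fin 3)` given by `a ↦ c·a`,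
`b ↦ a·b`, `c ↦ b⁻¹·a·b` and `G = F₃ ⋊_Φ ℤ` the mapping torus group (where
`1 ∈ ℤ` acts by `Φ`).  Then the abelianization of `G` is free abelian of rank 2:
it is isomorphic to `ℤ × ℤ` with the images of `b` and of the stable generator
`r` forming a basis. -/
theorem stmt3 (Φ : FreeGroup (Fin 3) ≃* FreeGroup (Fin 3))
    (ha : Φ (FreeGroup.of 0) = FreeGroup.of 2 * FreeGroup.of 0)
    (hb : Φ (FreeGroup.of 1) = FreeGroup.of 0 * FreeGroup.of 1)
    (hc : Φ (FreeGroup.of 2) = (FreeGroup.of 1)⁻¹ * FreeGroup.of 0 * FreeGroup.of 1) :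
    ∃ e : Abelianization
        (FreeGroup (Fin 3)
          ⋊[zpowersHom (MulAut (FreeGroup (Fin 3))) (Φ : MulAut (FreeGroup (Fin 3)))]
          Multiplicative ℤ) ≃* Multiplicative (ℤ × ℤ),
      e (Abelianization.of (SemidirectProduct.inl (FreeGroup.of 1))) =
        Multiplicative.ofAdd (1, 0) ∧
      e (Abelianization.of (SemidirectProduct.inr (Multiplicative.ofAdd 1))) =
        Multiplicative.ofAdd (0, 1) := by
  let e := (abelianizationSemidirectProductEquiv (zpowersHom _ Φ)).trans <|
    ((coinvariantsEquivInt ha hb hc).prodCongr Abelianization.equivOfComm.symm).trans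
      (MulEquiv.prodMultiplicative ℤ ℤ).symm
  refine ⟨e, ?_, ?_⟩
  · simp [e, MulEquiv.prodCongr]
  · simp [e, MulEquiv.prodCongr]
end

section
/- Let α be a type and let φ be an automorphism of the free group F(α) on α. Let G = F(α) ⋊_φ ℤ be the semidirect product in which n ∈ ℤ acts on F(α) by φⁿ. Then G is isomorphic to the presented group with generating set α ⊕ {r} and relator set { r⁻¹·x_a·r·(j(φ(x_a)))⁻¹ : a ∈ α }, where x_a denotes the generator of the free group on α ⊕ {r} corresponding to a ∈ α, r denotes the generator corresponding to the extra element, and j : F(α) → F(α ⊕ {r}) is the homomorphism induced by the inclusion of generating sets. -/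
/-!
The mapping torus `N ⋊[φ] ℤ` is universal among groups `H` with a homomorphism `f : N →* H` and an
element `r` such that `f (φ n) = r⁻¹ * f n * r` for all `n`. When `N` is free, both sides of this
equation are homomorphisms in `n`, so it suffices to require it on the generators; hence the
presented group is universal for the same data, and the two groups are isomorphic.
-/

open Function SemidirectProduct

theorem semiconj_perm_zpow {X Y : Type*} {f : X → Y} {σ : Equiv.Perm X} {τ : Equiv.Perm Y}
    (h : Semiconj f σ τ) (k : ℤ) : Semiconj f ⇑(σ ^ k) ⇑(τ ^ k) := by
  have semiconj_pow (n : ℕ) : Semiconj f ⇑(σ ^ n) ⇑(τ ^ n) := by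
    simpa only [Equiv.Perm.coe_pow] using h.iterate_right n
  cases k with
  | ofNat n => simpa only [Int.ofNat_eq_natCast, zpow_natCast] using semiconj_pow n
  | negSucc n =>
    simp only [zpow_negSucc]
    exact (semiconj_pow (n + 1)).inverses_right (σ ^ (n + 1)).right_inv (τ ^ (n + 1)).left_inv

theorem semiconj_mulAut_zpow {M N : Type*} [Mul M] [Mul N] {f : M → N} {φ : MulAut M}
    {ψ : MulAut N} (h : Semiconj f φ ψ) (k : ℤ) : Semiconj f ⇑(φ ^ k) ⇑(ψ ^ k) := by
  have h_perm : Semiconj f (MulAut.toPerm M φ) (MulAut.toPerm N ψ) := h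
  have h_zpow := semiconj_perm_zpow h_perm k
  rwa [← map_zpow, ← map_zpow] at h_zpow

/-- The mapping torus `N ⋊[φ] ℤ` of an automorphism `φ`, in which `k : ℤ` acts on `N` by `φ ^ k`.
The factor `ℤ` is written multiplicatively. -/
abbrev MappingTorus {N : Type*} [Group N] (φ : MulAut N) : Type _ :=
  N ⋊[zpowersHom (MulAut N) φ] Multiplicative ℤ

namespace MappingTorus

variable {N H : Type*} [Group N] [Group H] {φ : MulAut N}

/-- The stable letter `r` of the mapping torus. It is the generator `-1` of `ℤ`, since the
convention is `r⁻¹ * n * r = φ n` while `1 : ℤ` acts by `n ↦ φ n`. -/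
def stableLetter (φ : MulAut N) : MappingTorus φ :=
  inr (Multiplicative.ofAdd (-1))

theorem inl_apply (n : N) :
    (inl (φ n) : MappingTorus φ) = (stableLetter φ)⁻¹ * inl n * stableLetter φ := by
  simpa [stableLetter] using
    inl_aut (φ := zpowersHom (MulAut N) φ) (Multiplicative.ofAdd 1) n

theorem hom_ext {F G : MappingTorus φ →* H} (h_inl : F.comp inl = G.comp inl)
    (h_stable : F (stableLetter φ) = G (stableLetter φ)) : F = G := by
  refine SemidirectProduct.hom_ext h_inl (MonoidHom.ext_mint ?_)
  simpa [stableLetter] using h_stable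

section Lift

variable (f : N →* H) (r : H) (h : ∀ n, f (φ n) = r⁻¹ * f n * r)

/-- The universal property of the mapping torus: the homomorphism that extends `f` and sends the
stable letter to `r`. -/
def lift : MappingTorus φ →* H :=
  SemidirectProduct.lift f (zpowersHom H r⁻¹) fun k => by
    have h_conj : Semiconj f φ (MulAut.conj r⁻¹) := fun n => by simpa using h n
    ext n
    simpa using semiconj_mulAut_zpow h_conj k.toAdd n

@[simp]
theorem lift_inl (n : N) : lift f r h (inl n) = f n :=
  SemidirectProduct.lift_inl ..

@[simp]
theorem lift_stableLetter : lift f r h (stableLetter φ) = r := by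
  simp [lift, stableLetter]

end Lift

end MappingTorus

/-- The relators `r⁻¹ * x_a * r * (φ x_a)⁻¹` of the mapping torus of an endomorphism `φ` of a free
group. The stable letter `r` is the generator `Sum.inr ()`. -/
def mappingTorusRels {α : Type*} (φ : FreeGroup α →* FreeGroup α) : Set (FreeGroup (α ⊕ Unit)) :=
  Set.range fun a => (FreeGroup.of (Sum.inr ()))⁻¹ * FreeGroup.of (Sum.inl a) *
    FreeGroup.of (Sum.inr ()) * (FreeGroup.map Sum.inl (φ (FreeGroup.of a)))⁻¹

/-- The mapping torus of an endomorphism `φ` of a free group, given by generators and relators. -/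
abbrev PresentedMappingTorus {α : Type*} (φ : FreeGroup α →* FreeGroup α) : Type _ :=
  PresentedGroup (mappingTorusRels φ)

namespace PresentedMappingTorus

variable {α H : Type*} [Group H] {φ : FreeGroup α →* FreeGroup α}

/-- The canonical homomorphism from the free group to the presented mapping torus; it need not be
injective when `φ` is not. -/
def base (φ : FreeGroup α →* FreeGroup α) : FreeGroup α →* PresentedMappingTorus φ :=
  (PresentedGroup.mk _).comp (FreeGroup.map Sum.inl)

/-- The stable letter `r` of the presented mapping torus. -/
def stableLetter (φ : FreeGroup α →* FreeGroup α) : PresentedMappingTorus φ :=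
  PresentedGroup.of (Sum.inr ())

theorem base_apply (x : FreeGroup α) :
    base φ (φ x) = (stableLetter φ)⁻¹ * base φ x * stableLetter φ := by
  suffices h_comp : (base φ).comp φ = (MulAut.conj (stableLetter φ)⁻¹).toMonoidHom.comp (base φ) by
    simpa using DFunLike.congr_fun h_comp x
  ext a
  have h_rel := PresentedGroup.mk_eq_mk_of_mul_inv_mem (rels := mappingTorusRels φ) ⟨a, rfl⟩
  simpa [base, stableLetter, PresentedGroup.of] using h_rel.symm

theorem hom_ext {F G : PresentedMappingTorus φ →* H} (h_base : F.comp (base φ) = G.comp (base φ))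
    (h_stable : F (stableLetter φ) = G (stableLetter φ)) : F = G := by
  refine PresentedGroup.ext ?_
  rintro (a | ⟨⟩)
  · exact DFunLike.congr_fun h_base (FreeGroup.of a)
  · exact h_stable

section Lift

variable (f : FreeGroup α →* H) (r : H)
  (h : ∀ a, f (φ (FreeGroup.of a)) = r⁻¹ * f (FreeGroup.of a) * r)

theorem lift_elim_map_inl (x : FreeGroup α) :
    FreeGroup.lift (Sum.elim (fun a => f (FreeGroup.of a)) fun _ : Unit => r)
      (FreeGroup.map Sum.inl x) = f x := by
  suffices h_comp : (FreeGroup.lift (Sum.elim (fun a => f (FreeGroup.of a)) fun _ : Unit => r)).comp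
      (FreeGroup.map Sum.inl) = f from DFunLike.congr_fun h_comp x
  ext a
  simp

/-- The universal property of the presented mapping torus: the homomorphism that extends `f` and
sends the stable letter to `r`. -/
def lift : PresentedMappingTorus φ →* H :=
  PresentedGroup.toGroup (f := Sum.elim (fun a => f (FreeGroup.of a)) fun _ => r) <| by
    rintro _ ⟨a, rfl⟩
    simp [lift_elim_map_inl, h]

@[simp]
theorem lift_base (x : FreeGroup α) : lift f r h (base φ x) = f x :=
  lift_elim_map_inl f r x

@[simp]
theorem lift_stableLetter : lift f r h (stableLetter φ) = r :=
  PresentedGroup.toGroup.of _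

end Lift

end PresentedMappingTorus

namespace MappingTorus

variable {α : Type*} (φ : MulAut (FreeGroup α))

/-- The comparison homomorphism from the mapping torus of an automorphism of a free group to its
presented version. -/
def toPresented : MappingTorus φ →* PresentedMappingTorus (φ : FreeGroup α →* FreeGroup α) :=
  lift (PresentedMappingTorus.base _) (PresentedMappingTorus.stableLetter _)
    PresentedMappingTorus.base_apply

/-- The comparison homomorphism in the opposite direction to `MappingTorus.toPresented`. -/
def ofPresented : PresentedMappingTorus (φ : FreeGroup α →* FreeGroup α) →* MappingTorus φ :=
  PresentedMappingTorus.lift inl (stableLetter φ) fun a => inl_apply (FreeGroup.of a)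

@[simp]
theorem toPresented_inl (x : FreeGroup α) :
    toPresented φ (inl x) = PresentedMappingTorus.base _ x :=
  lift_inl ..

@[simp]
theorem toPresented_stableLetter :
    toPresented φ (stableLetter φ) = PresentedMappingTorus.stableLetter _ :=
  lift_stableLetter ..

@[simp]
theorem ofPresented_base (x : FreeGroup α) :
    ofPresented φ (PresentedMappingTorus.base _ x) = inl x :=
  PresentedMappingTorus.lift_base ..

@[simp]
theorem ofPresented_stableLetter :
    ofPresented φ (PresentedMappingTorus.stableLetter _) = stableLetter φ :=
  PresentedMappingTorus.lift_stableLetter ..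

theorem ofPresented_comp_toPresented :
    (ofPresented φ).comp (toPresented φ) = MonoidHom.id _ := by
  apply hom_ext
  · ext1 a
    simp
  · simp

theorem toPresented_comp_ofPresented :
    (toPresented φ).comp (ofPresented φ) = MonoidHom.id _ := by
  apply PresentedMappingTorus.hom_ext
  · ext1 a
    simp
  · simp

/-- The isomorphism between the two mapping tori of an automorphism of a free group. -/
def equivPresented :
    MappingTorus φ ≃* PresentedMappingTorus (φ : FreeGroup α →* FreeGroup α) :=
  (toPresented φ).toMulEquiv (ofPresented φ) (ofPresented_comp_toPresented φ)
    (toPresented_comp_ofPresented φ)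

end MappingTorus

/-- For any automorphism `φ` of a free group `F(α)`, the mapping torus group
`F(α) ⋊_φ ℤ` (with `1 ∈ ℤ` acting by `φ`) is isomorphic to the presented group
on generators `α ⊕ {r}` with relators `r⁻¹ x_a r (j(φ(x_a)))⁻¹` for `a ∈ α`,
where `j : F(α) → F(α ⊕ {r})` is induced by the inclusion of generators. -/
theorem stmt4 (α : Type*) (φ : FreeGroup α ≃* FreeGroup α) :
    Nonempty
      ((FreeGroup α
          ⋊[zpowersHom (MulAut (FreeGroup α)) (φ : MulAut (FreeGroup α))]
          Multiplicative ℤ) ≃*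
        PresentedGroup (Set.range (fun a : α =>
          (FreeGroup.of (Sum.inr () : α ⊕ Unit))⁻¹ * FreeGroup.of (Sum.inl a : α ⊕ Unit) *
            FreeGroup.of (Sum.inr () : α ⊕ Unit) *
            (FreeGroup.map (Sum.inl : α → α ⊕ Unit) (φ (FreeGroup.of a)))⁻¹))) :=
  ⟨MappingTorus.equivPresented φ⟩
end

section
/- The presented group G₀ = ⟨a, b, c, r | r⁻¹ar(ca)⁻¹, r⁻¹br(ab)⁻¹, r⁻¹cr(b⁻¹ab)⁻¹⟩ is isomorphic to the one-relator presented group ⟨b, r | r³b⁻¹r⁻¹br⁻¹brb⁻¹r⁻¹br⁻¹b⁻¹⟩. -/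
/-!
In an arbitrary group `r⁻¹xr = yx` says exactly that `y = ⁅r⁻¹, x⁆`. So the first two relators read
`c = ⁅r⁻¹, a⁆` and `a = ⁅r⁻¹, b⁆`, and both `a` and `c` can be eliminated. The substitution turns
these relators into `1` and the third one into a conjugate, by `r³`, of the inverse of the single
relator on `b` and `r`, which therefore has the same normal closure.
-/

open FreeGroup (of lift)
open Subgroup (normalClosure)
open scoped commutatorElement

section NormalClosure

variable {G : Type*} [Group G]

lemma normalClosure_insert_one (s : Set G) : normalClosure (insert 1 s) = normalClosure s := by
  rw [Set.insert_eq, Subgroup.normalClosure_union,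
    Subgroup.normalClosure_eq_bot_iff.mpr subset_rfl, bot_sup_eq]

lemma normalClosure_singleton_inv (g : G) : normalClosure {g⁻¹} = normalClosure {g} := by
  rw [← Subgroup.normalClosure_closure_eq_normalClosure, Subgroup.closure_singleton_inv,
    Subgroup.normalClosure_closure_eq_normalClosure]

lemma normalClosure_singleton_eq_of_isConj {g h : G} (hgh : IsConj g h) :
    normalClosure {g} = normalClosure {h} := by
  simp only [normalClosure, Group.conjugatesOfSet, Set.mem_singleton_iff, Set.iUnion_iUnion_eq_left,
    hgh.conjugatesOf_eq]

end NormalClosure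

section TietzeElimination

variable {α β : Type*}

/-- Tietze elimination of generators: `τ` includes the retained generators `β` among the words in
`α`, and `σ` substitutes a word in `β` for each generator in `α`. If every generator equals its
substituted word modulo `rels`, applying the substitution to `rels` presents the same group. -/
def tietzeEliminationEquiv (σ : FreeGroup α →* FreeGroup β) (τ : FreeGroup β →* FreeGroup α)
    (hστ : σ.comp τ = MonoidHom.id _) (rels : Set (FreeGroup α))
    (hτσ : ∀ x, PresentedGroup.mk rels (τ (σ (of x))) = PresentedGroup.of x) :
    PresentedGroup rels ≃* PresentedGroup (σ '' rels) :=
  have retract : ((PresentedGroup.mk rels).comp τ).comp σ = PresentedGroup.mk rels :=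
    FreeGroup.ext_hom _ _ hτσ
  have image_le_ker : normalClosure (σ '' rels) ≤ ((PresentedGroup.mk rels).comp τ).ker :=
    Subgroup.normalClosure_le_normal <| Set.forall_mem_image.mpr fun _ hs ↦
      (DFunLike.congr_fun retract _).trans (PresentedGroup.one_of_mem hs)
  let inverse : PresentedGroup (σ '' rels) →* PresentedGroup rels :=
    QuotientGroup.lift _ ((PresentedGroup.mk rels).comp τ) image_le_ker
  MonoidHom.toMulEquiv (PresentedGroup.map σ (Set.mapsTo_image σ rels)) inverse
    (PresentedGroup.ext hτσ)
    (PresentedGroup.ext fun y ↦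
      congrArg (PresentedGroup.mk (σ '' rels)) (DFunLike.congr_fun hστ (of y)))

end TietzeElimination

section Relators

variable {G : Type*} [Group G]

/-- The relator `r³b⁻¹r⁻¹br⁻¹brb⁻¹r⁻¹br⁻¹b⁻¹` of the one-relator presentation, evaluated in an
arbitrary group. -/
def oneRelator (b r : G) : G :=
  r ^ 3 * b⁻¹ * r⁻¹ * b * r⁻¹ * b * r * b⁻¹ * r⁻¹ * b * r⁻¹ * b⁻¹

/-- The relator `r⁻¹cr(b⁻¹ab)⁻¹` with `a = ⁅r⁻¹, b⁆` and `c = ⁅r⁻¹, a⁆`, evaluated in an arbitrary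
group. -/
def substitutedRelator (b r : G) : G :=
  r⁻¹ * ⁅r⁻¹, ⁅r⁻¹, b⁆⁆ * r * (b⁻¹ * ⁅r⁻¹, b⁆ * b)⁻¹

lemma inv_mul_mul_mul_mul_inv_eq_one_iff {r x y : G} :
    r⁻¹ * x * r * (y * x)⁻¹ = 1 ↔ ⁅r⁻¹, x⁆ = y := by
  rw [mul_inv_eq_one, commutatorElement_def, inv_inv, mul_inv_eq_iff_eq_mul]

lemma isConj_substitutedRelator_oneRelator_inv (b r : G) :
    IsConj (substitutedRelator b r) (oneRelator b r)⁻¹ := by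
  refine isConj_iff.mpr ⟨r ^ 3, ?_⟩
  simp only [substitutedRelator, oneRelator, commutatorElement_def]
  group

end Relators

/-- The relators of the mapping torus group of `a ↦ ca`, `b ↦ ab`, `c ↦ b⁻¹ab`, where
`a`, `b`, `c` and the stable letter `r` are the generators `0`, `1`, `2` and `3`. -/
def mappingTorusRelators : Set (FreeGroup (Fin 4)) :=
  {(of 3)⁻¹ * of 0 * of 3 * (of 2 * of 0)⁻¹,
    (of 3)⁻¹ * of 1 * of 3 * (of 0 * of 1)⁻¹,
    (of 3)⁻¹ * of 2 * of 3 * ((of 1)⁻¹ * of 0 * of 1)⁻¹}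

/-- The substitution `a ↦ ⁅r⁻¹, b⁆`, `c ↦ ⁅r⁻¹, ⁅r⁻¹, b⁆⁆` that eliminates `a` and `c`; in the
target `b` and `r` are the generators `0` and `1`. -/
def eliminateAC : FreeGroup (Fin 4) →* FreeGroup (Fin 2) :=
  let b : FreeGroup (Fin 2) := of 0
  let r : FreeGroup (Fin 2) := of 1
  lift ![⁅r⁻¹, b⁆, b, ⁅r⁻¹, ⁅r⁻¹, b⁆⁆, r]

/-- The inclusion of the words in the retained generators `b` and `r`. -/
def includeBR : FreeGroup (Fin 2) →* FreeGroup (Fin 4) :=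
  FreeGroup.map ![1, 3]

lemma eliminateAC_comp_includeBR : eliminateAC.comp includeBR = MonoidHom.id _ := by
  ext i
  fin_cases i <;> simp [includeBR, eliminateAC]

lemma eliminateAC_image_mappingTorusRelators :
    eliminateAC '' mappingTorusRelators = {1, substitutedRelator (of 0) (of 1)} := by
  have map_relator_a : eliminateAC ((of 3)⁻¹ * of 0 * of 3 * (of 2 * of 0)⁻¹) = 1 := by
    simp only [map_mul, map_inv]
    exact inv_mul_mul_mul_mul_inv_eq_one_iff.mpr rfl
  have map_relator_b : eliminateAC ((of 3)⁻¹ * of 1 * of 3 * (of 0 * of 1)⁻¹) = 1 := by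
    simp only [map_mul, map_inv]
    exact inv_mul_mul_mul_mul_inv_eq_one_iff.mpr rfl
  rw [mappingTorusRelators, Set.image_insert_eq, Set.image_insert_eq, Set.image_singleton,
    map_relator_a, map_relator_b, Set.insert_idem]
  rfl

lemma normalClosure_eliminateAC_image :
    normalClosure (eliminateAC '' mappingTorusRelators) =
      normalClosure {oneRelator (of 0) (of 1)} := by
  rw [eliminateAC_image_mappingTorusRelators, normalClosure_insert_one,
    normalClosure_singleton_eq_of_isConj (isConj_substitutedRelator_oneRelator_inv _ _),
    normalClosure_singleton_inv]

lemma mk_includeBR_eliminateAC (i : Fin 4) :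
    PresentedGroup.mk mappingTorusRelators (includeBR (eliminateAC (of i))) =
      PresentedGroup.of i := by
  let q : Fin 4 → PresentedGroup mappingTorusRelators := PresentedGroup.of
  have a_eq : ⁅(q 3)⁻¹, q 1⁆ = q 0 :=
    inv_mul_mul_mul_mul_inv_eq_one_iff.mp <| PresentedGroup.one_of_mem (Or.inr (Or.inl rfl))
  have c_eq : ⁅(q 3)⁻¹, q 0⁆ = q 2 :=
    inv_mul_mul_mul_mul_inv_eq_one_iff.mp <| PresentedGroup.one_of_mem (Or.inl rfl)
  fin_cases i
  · exact a_eq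
  · rfl
  · change ⁅(q 3)⁻¹, ⁅(q 3)⁻¹, q 1⁆⁆ = q 2
    rw [a_eq, c_eq]
  · rfl

/-- The presented group
`⟨a, b, c, r | r⁻¹ar(ca)⁻¹, r⁻¹br(ab)⁻¹, r⁻¹cr(b⁻¹ab)⁻¹⟩`
(generators `a = of 0`, `b = of 1`, `c = of 2`, `r = of 3`) is isomorphic to the
one-relator group `⟨b, r | r³b⁻¹r⁻¹br⁻¹brb⁻¹r⁻¹br⁻¹b⁻¹⟩`
(generators `b = of 0`, `r = of 1`). -/
theorem stmt5 :
    Nonempty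
      (PresentedGroup
        ({(FreeGroup.of 3)⁻¹ * FreeGroup.of 0 * FreeGroup.of 3 *
            (FreeGroup.of 2 * FreeGroup.of 0)⁻¹,
          (FreeGroup.of 3)⁻¹ * FreeGroup.of 1 * FreeGroup.of 3 *
            (FreeGroup.of 0 * FreeGroup.of 1)⁻¹,
          (FreeGroup.of 3)⁻¹ * FreeGroup.of 2 * FreeGroup.of 3 *
            ((FreeGroup.of 1)⁻¹ * FreeGroup.of 0 * FreeGroup.of 1)⁻¹} :
          Set (FreeGroup (Fin 4))) ≃*
       PresentedGroup
        ({(FreeGroup.of 1) ^ 3 * (FreeGroup.of 0)⁻¹ * (FreeGroup.of 1)⁻¹ *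
            FreeGroup.of 0 * (FreeGroup.of 1)⁻¹ * FreeGroup.of 0 * FreeGroup.of 1 *
            (FreeGroup.of 0)⁻¹ * (FreeGroup.of 1)⁻¹ * FreeGroup.of 0 *
            (FreeGroup.of 1)⁻¹ * (FreeGroup.of 0)⁻¹} :
          Set (FreeGroup (Fin 2)))) :=
  ⟨(tietzeEliminationEquiv eliminateAC includeBR eliminateAC_comp_includeBR
    mappingTorusRelators mk_includeBR_eliminateAC).trans
      (QuotientGroup.quotientMulEquivOfEq normalClosure_eliminateAC_image)⟩
end

section
/- Let k ≥ 1 be a natural number and let F_{k+3} be the free group on the k + 3 generators s₁, s₂, t₁, …, t_{k+1}. The group endomorphism φ_k of F_{k+3} determined on generators by s₁ ↦ t₁, s₂ ↦ s₂·t₁, t_i ↦ t_{i+1} for 1 ≤ i ≤ k, and t_{k+1} ↦ s₂·s₁·t₁·s₂⁻¹ is bijective; that is, φ_k is an automorphism of F_{k+3}. -/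
/-!
`φ_k` factors as a cyclic permutation of generators followed by two Nielsen maps. The permutation
sends `s₁ ↦ t₁ ↦ ⋯ ↦ t_{k+1} ↦ s₁` and fixes `s₂`; then `s₂ ↦ s₂ t₁`, and finally
`s₁ ↦ s₂ s₁ t₁ s₂⁻¹`. A map that replaces one generator `x` by `u x v` and fixes the others is an
automorphism as soon as `u` and `v` are words in the other generators, because it then fixes `u` and
`v`, so its inverse replaces `x` by `u⁻¹ x v⁻¹`.
-/

section NielsenMap

variable {α : Type*}

/-- The free factor of `FreeGroup α` generated by all generators other than `x`. -/
def complementaryFactor (x : α) : Subgroup (FreeGroup α) :=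
  Subgroup.closure (FreeGroup.of '' {x}ᶜ)

theorem of_mem_complementaryFactor {x y : α} (h : y ≠ x) :
    FreeGroup.of y ∈ complementaryFactor x :=
  Subgroup.subset_closure (Set.mem_image_of_mem _ h)

variable [DecidableEq α]

/-- The endomorphism of `FreeGroup α` that replaces the generator `x` by `u * x * v` and fixes all
other generators. The Nielsen transvections `x ↦ y^{±1} x` and `x ↦ x y^{±1}` are the case where one
of `u`, `v` is `y^{±1}` for another generator `y` and the other is `1`. -/
def nielsenMap (x : α) (u v : FreeGroup α) : FreeGroup α →* FreeGroup α :=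
  FreeGroup.lift (Function.update FreeGroup.of x (u * FreeGroup.of x * v))

@[simp]
theorem nielsenMap_of_self (x : α) (u v : FreeGroup α) :
    nielsenMap x u v (FreeGroup.of x) = u * FreeGroup.of x * v := by
  simp [nielsenMap]

theorem nielsenMap_of_ne {x y : α} (h : y ≠ x) (u v : FreeGroup α) :
    nielsenMap x u v (FreeGroup.of y) = FreeGroup.of y := by
  simp [nielsenMap, h]

theorem nielsenMap_apply_of_mem {x : α} {w : FreeGroup α} (hw : w ∈ complementaryFactor x)
    (u v : FreeGroup α) : nielsenMap x u v w = w := by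
  have fixes_generators : Set.EqOn (nielsenMap x u v) (MonoidHom.id _) (FreeGroup.of '' {x}ᶜ) := by
    rintro _ ⟨y, hy, rfl⟩
    exact nielsenMap_of_ne hy u v
  exact MonoidHom.eqOn_closure fixes_generators hw

theorem nielsenMap_one_one (x : α) : nielsenMap x 1 1 = MonoidHom.id (FreeGroup α) := by
  simp only [nielsenMap, one_mul, mul_one, Function.update_eq_self, FreeGroup.lift_of_eq_id]

theorem nielsenMap_comp_nielsenMap {x : α} {u v : FreeGroup α} (hu : u ∈ complementaryFactor x)
    (hv : v ∈ complementaryFactor x) (u' v' : FreeGroup α) :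
    (nielsenMap x u' v').comp (nielsenMap x u v) = nielsenMap x (u * u') (v' * v) := by
  ext y
  rcases eq_or_ne y x with rfl | hy
  · simp only [MonoidHom.comp_apply, nielsenMap_of_self, map_mul, nielsenMap_apply_of_mem hu,
      nielsenMap_apply_of_mem hv, mul_assoc]
  · simp only [MonoidHom.comp_apply, nielsenMap_of_ne hy]

theorem nielsenMap_bijective {x : α} {u v : FreeGroup α} (hu : u ∈ complementaryFactor x)
    (hv : v ∈ complementaryFactor x) : Function.Bijective (nielsenMap x u v) := by
  have left_inv : (nielsenMap x u⁻¹ v⁻¹).comp (nielsenMap x u v) = MonoidHom.id _ := by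
    rw [nielsenMap_comp_nielsenMap hu hv, mul_inv_cancel, inv_mul_cancel, nielsenMap_one_one]
  have right_inv : (nielsenMap x u v).comp (nielsenMap x u⁻¹ v⁻¹) = MonoidHom.id _ := by
    rw [nielsenMap_comp_nielsenMap (inv_mem hu) (inv_mem hv), inv_mul_cancel, mul_inv_cancel,
      nielsenMap_one_one]
  exact (MonoidHom.toMulEquiv _ _ left_inv right_inv).bijective

end NielsenMap

section FirstReturnMap

open FreeGroup (of)
open Sum (inl inr)

variable (k : ℕ)

/-- The permutation `s₁ ↦ t₁ ↦ t₂ ↦ ⋯ ↦ t_{k+1} ↦ s₁` of the generators, fixing `s₂`: rotate the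
`t_i` among themselves, then exchange `s₁` and `t₁`. -/
def cycleGenerators : Equiv.Perm (Fin 2 ⊕ Fin (k + 1)) :=
  Equiv.swap (inl 0) (inr 0) * Equiv.sumCongr 1 (finRotate (k + 1))

theorem cycleGenerators_inl_zero : cycleGenerators k (inl 0) = inr 0 := by
  simp [cycleGenerators]

theorem cycleGenerators_inl_one : cycleGenerators k (inl 1) = inl 1 := by
  simp [cycleGenerators, Equiv.swap_apply_def]

theorem cycleGenerators_inr_last : cycleGenerators k (inr (Fin.last k)) = inl 0 := by
  simp [cycleGenerators]

variable {k} in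
theorem cycleGenerators_inr_of_lt {j : ℕ} (h : j < k) :
    cycleGenerators k (inr ⟨j, h.trans k.lt_succ_self⟩) = inr ⟨j + 1, Nat.succ_lt_succ h⟩ := by
  simp [cycleGenerators, finRotate_of_lt h, Equiv.swap_apply_def]

/-- The map `φ_k`, as a composite of a permutation of the generators and two Nielsen maps; the
generators `s₁`, `s₂`, `t_{j+1}` are `inl 0`, `inl 1`, `inr j`. -/
def firstReturnMap : FreeGroup (Fin 2 ⊕ Fin (k + 1)) →* FreeGroup (Fin 2 ⊕ Fin (k + 1)) :=
  (nielsenMap (inl 0) (of (inl 1)) (of (inr 0) * (of (inl 1))⁻¹)).comp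
    ((nielsenMap (inl 1) 1 (of (inr 0))).comp (FreeGroup.map (cycleGenerators k)))

theorem firstReturnMap_bijective : Function.Bijective (firstReturnMap k) := by
  have ht₁ (i : Fin 2) : of (inr 0) ∈ complementaryFactor (inl i : Fin 2 ⊕ Fin (k + 1)) :=
    of_mem_complementaryFactor Sum.inr_ne_inl
  have hs₂ : of (inl 1) ∈ complementaryFactor (inl 0 : Fin 2 ⊕ Fin (k + 1)) :=
    of_mem_complementaryFactor (Sum.inl_injective.ne one_ne_zero)
  exact (nielsenMap_bijective hs₂ (mul_mem (ht₁ 0) (inv_mem hs₂))).comp <|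
    (nielsenMap_bijective (one_mem _) (ht₁ 1)).comp
      (FreeGroup.freeGroupCongr (cycleGenerators k)).bijective

theorem firstReturnMap_of_inl_zero : firstReturnMap k (of (inl 0)) = of (inr 0) := by
  simp [firstReturnMap, cycleGenerators_inl_zero, nielsenMap_of_ne]

theorem firstReturnMap_of_inl_one :
    firstReturnMap k (of (inl 1)) = of (inl 1) * of (inr 0) := by
  simp [firstReturnMap, cycleGenerators_inl_one, nielsenMap_of_ne]

variable {k} in
theorem firstReturnMap_of_inr_of_lt {j : ℕ} (h : j < k) :
    firstReturnMap k (of (inr ⟨j, h.trans k.lt_succ_self⟩)) =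
      of (inr ⟨j + 1, Nat.succ_lt_succ h⟩) := by
  simp [firstReturnMap, cycleGenerators_inr_of_lt h, nielsenMap_of_ne]

theorem firstReturnMap_of_inr_last :
    firstReturnMap k (of (inr (Fin.last k))) =
      of (inl 1) * of (inl 0) * of (inr 0) * (of (inl 1))⁻¹ := by
  simp [firstReturnMap, cycleGenerators_inr_last, nielsenMap_of_ne, mul_assoc]

end FirstReturnMap

/-- For `k ≥ 1`, the endomorphism `φ_k` of the free group on `k + 3` generators
`s₁ = of (inl 0)`, `s₂ = of (inl 1)`, `t_{j+1} = of (inr j)` for `j : Fin (k+1)`,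
determined by `s₁ ↦ t₁`, `s₂ ↦ s₂·t₁`, `t_i ↦ t_{i+1}` for `1 ≤ i ≤ k`, and
`t_{k+1} ↦ s₂·s₁·t₁·s₂⁻¹`, is an automorphism. -/
theorem stmt6 (k : ℕ) (hk : 1 ≤ k) :
    Function.Bijective
      (FreeGroup.lift (fun x : Fin 2 ⊕ Fin (k + 1) =>
        match x with
        | Sum.inl s =>
            if s = 0 then FreeGroup.of (Sum.inr 0 : Fin 2 ⊕ Fin (k + 1))
            else FreeGroup.of (Sum.inl 1 : Fin 2 ⊕ Fin (k + 1)) *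
              FreeGroup.of (Sum.inr 0 : Fin 2 ⊕ Fin (k + 1))
        | Sum.inr j =>
            if h : (j : ℕ) < k then
              FreeGroup.of (Sum.inr (⟨(j : ℕ) + 1, by omega⟩ : Fin (k + 1)) :
                Fin 2 ⊕ Fin (k + 1))
            else
              FreeGroup.of (Sum.inl 1 : Fin 2 ⊕ Fin (k + 1)) *
                FreeGroup.of (Sum.inl 0 : Fin 2 ⊕ Fin (k + 1)) *
                FreeGroup.of (Sum.inr 0 : Fin 2 ⊕ Fin (k + 1)) *
                (FreeGroup.of (Sum.inl 1 : Fin 2 ⊕ Fin (k + 1)))⁻¹)) := by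
  convert firstReturnMap_bijective k
  ext x
  rcases x with s | j
  · fin_cases s
    · simp [firstReturnMap_of_inl_zero]
    · simp [firstReturnMap_of_inl_one]
  · by_cases h : (j : ℕ) < k
    · simp [h, firstReturnMap_of_inr_of_lt h]
    · obtain rfl : j = Fin.last k := Fin.eq_last_of_not_lt h
      simp [firstReturnMap_of_inr_last]
end
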